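/- Let a≥2 and b≥1 be integers and G=G(a,b). For all 1≤i<j≤2a such that u_i and u_j are adjacent in G (i.e., {i,j} is not a pair {2k−1,2k} for any k), the Lin–Lu–Yau curvature satisfies κ_LLY(u_i,u_j)=1. -/

import Mathlib

/-!
Let `x'`, `y'` be the unique non-neighbours of `x`, `y`, and let `q = (1 - p) / d` with `d` the
common degree of `x` and `y`. Off `x, x'` the measure `μ_x^p` is constantly `q`, and off `y, y'` so
is `μ_y^p`; hence `μ_x^p - μ_y^p = (p - q) (δ_x - δ_y) + q (δ_{y'} - δ_{x'})`. Moving mass `p - q`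
along the edge `x ∼ y` and mass `q` along the edge `y' ∼ x'` costs `p`, and the indicator of
`{x, y'}`, which is 1-Lipschitz, shows by weak Kantorovich duality that this is optimal. Therefore
`κ_p(x, y) = 1 - p` as soon as `q ≤ p`.
-/

open scoped Classical
open Finset

noncomputable section

/-- The degree of a vertex `x` in the graph `G`. -/
def deg {V : Type*} [Fintype V] (G : SimpleGraph V) (x : V) : ℕ :=
  (Finset.univ.filter (fun y => G.Adj x y)).card

/-- The diameter of `G`: the maximum of the combinatorial distance over all pairs of vertices. -/
def diam {V : Type*} [Fintype V] (G : SimpleGraph V) : ℕ :=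
  Finset.univ.sup (fun xy : V × V => G.dist xy.1 xy.2)

/-- The probability measure `μ_x^p` of the lazy simple random walk at `x` with idleness `p`. -/
def mu {V : Type*} [Fintype V] (G : SimpleGraph V) (p : ℝ) (x : V) : V → ℝ :=
  fun z => if z = x then p else if G.Adj x z then (1 - p) / (deg G x : ℝ) else 0

/-- The Wasserstein distance `W₁(μ₁, μ₂)` with respect to the combinatorial distance of `G`:
the infimum of the total transport cost over all transport plans from `μ₁` to `μ₂`. -/
def W1 {V : Type*} [Fintype V] (G : SimpleGraph V) (μ₁ μ₂ : V → ℝ) : ℝ :=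
  sInf {c : ℝ | ∃ π : V → V → ℝ,
    (∀ x y, 0 ≤ π x y ∧ π x y ≤ 1) ∧
    (∀ x, ∑ y, π x y = μ₁ x) ∧
    (∀ y, ∑ x, π x y = μ₂ y) ∧
    c = ∑ x, ∑ y, (G.dist x y : ℝ) * π x y}

/-- The `p`-Ollivier-Ricci curvature `κ_p(x,y) = 1 - W₁(μ_x^p, μ_y^p)`. -/
def kappa {V : Type*} [Fintype V] (G : SimpleGraph V) (p : ℝ) (x y : V) : ℝ :=
  1 - W1 G (mu G p x) (mu G p y)

/-- The Lin-Lu-Yau curvature `κ_LLY(x,y) = lim_{p→1} κ_p(x,y)/(1-p)`. -/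
def kappaLLY {V : Type*} [Fintype V] (G : SimpleGraph V) (x y : V) : ℝ :=
  Filter.limUnder (nhdsWithin 1 (Set.Iio 1)) (fun p => kappa G p x y / (1 - p))

/-- `G` is Bonnet-Myers sharp if the infimum of `κ_LLY` over the edges equals `2/diam(G)`. -/
def BMSharp {V : Type*} [Fintype V] (G : SimpleGraph V) : Prop :=
  sInf {r : ℝ | ∃ x y, G.Adj x y ∧ r = kappaLLY G x y} = 2 / (diam G : ℝ)

/-- `G` is obtained from the complete graph on its vertex set by deleting a matching
(a set of pairwise disjoint edges, encoded as a symmetric irreflexive relation in which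
every vertex has at most one partner). -/
def IsMatchingDeletionOfComplete {V : Type*} (G : SimpleGraph V) : Prop :=
  ∃ M : V → V → Prop, Symmetric M ∧ (∀ x, ¬ M x x) ∧
    (∀ x y z, M x y → M x z → y = z) ∧
    (∀ x y, G.Adj x y ↔ x ≠ y ∧ ¬ M x y)

/-- The graph `G(a,b)` on `2a+b` vertices `u_1, …, u_{2a}, v_1, …, v_b` (encoded as
`Fin (2a+b)`, with `u_i` the index `i-1` and `v_j` the index `2a+j-1`), in which two distinct
vertices are adjacent unless they form a pair `{u_{2i-1}, u_{2i}}`, i.e. `G(a,b)` is the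
complete graph `K_{2a+b}` with a matching of size `a` deleted. -/
def Gab (a b : ℕ) : SimpleGraph (Fin (2*a+b)) where
  Adj x y := x ≠ y ∧ ¬((x : ℕ) < 2*a ∧ (y : ℕ) < 2*a ∧ (x : ℕ)/2 = (y : ℕ)/2)
  symm := by
    constructor
    intro x y h
    exact ⟨h.1.symm, fun hc => h.2 ⟨hc.2.1, hc.1, hc.2.2.symm⟩⟩
  loopless := by constructor; intro x h; exact h.1 rfl

/-- The antitree `AT(a_1, …, a_N)` on the disjoint union of sets `V_1, …, V_N` with
`|V_k| = a_k` (0-indexed here: `V_k` is `Fin (a k)` for `k : Fin N`): two distinct vertices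
are adjacent iff they lie in the same set or in consecutive sets. -/
def antitree (N : ℕ) (a : Fin N → ℕ) : SimpleGraph (Σ k : Fin N, Fin (a k)) where
  Adj x y := x ≠ y ∧
    ((x.1 : ℕ) = (y.1 : ℕ) ∨ (x.1 : ℕ) + 1 = (y.1 : ℕ) ∨ (y.1 : ℕ) + 1 = (x.1 : ℕ))
  symm := by
    constructor
    intro x y h
    refine ⟨h.1.symm, ?_⟩
    rcases h.2 with h2 | h2 | h2
    · exact Or.inl h2.symm
    · exact Or.inr (Or.inr h2)
    · exact Or.inr (Or.inl h2)
  loopless := by constructor; intro x h; exact h.1 rfl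

section Graph

variable {V : Type*} {G : SimpleGraph V} {x y x' y' z : V}

theorem indicator_sub_indicator_le_dist (hG : G.Connected) (S : Set V) (z w : V) :
    S.indicator (1 : V → ℝ) z - S.indicator 1 w ≤ G.dist z w := by
  rcases eq_or_ne z w with rfl | hzw
  · simp
  · have hdist : (1 : ℝ) ≤ G.dist z w := mod_cast hG.pos_dist_of_ne hzw
    have hz : S.indicator (1 : V → ℝ) z ≤ 1 :=
      Set.indicator_le_self' (fun _ _ => zero_le_one) z
    have hw : 0 ≤ S.indicator (1 : V → ℝ) w :=
      Set.indicator_nonneg (fun _ _ => zero_le_one) w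
    linarith

theorem ne_of_compl_neighborSet_eq_singleton (hx : Gᶜ.neighborSet x = {x'}) : x ≠ x' :=
  ((Gᶜ.mem_neighborSet x x').1 (hx ▸ rfl)).ne

theorem adj_iff_of_compl_neighborSet_eq_singleton (hx : Gᶜ.neighborSet x = {x'}) :
    G.Adj x z ↔ z ≠ x ∧ z ≠ x' := by
  have hz : Gᶜ.Adj x z ↔ z = x' := by rw [← SimpleGraph.mem_neighborSet, hx]; rfl
  have hne : G.Adj x z → x ≠ z := SimpleGraph.Adj.ne
  rw [ne_eq z x', ← hz, SimpleGraph.compl_adj]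
  tauto

theorem connected_of_compl_neighborSet_eq_singleton (hxy : G.Adj x y)
    (hx : Gᶜ.neighborSet x = {x'}) (hy : Gᶜ.neighborSet y = {y'}) (hne : x' ≠ y') :
    G.Connected := by
  have hyx' : G.Adj y x' := (adj_iff_of_compl_neighborSet_eq_singleton hy).2
    ⟨((adj_iff_of_compl_neighborSet_eq_singleton hx).1 hxy).2.symm, hne⟩
  refine SimpleGraph.connected_iff_exists_forall_reachable _ |>.2 ⟨x, fun z => ?_⟩
  by_cases hzx : z = x
  · rw [hzx]
  by_cases hzx' : z = x'
  · exact hzx' ▸ hxy.reachable.trans hyx'.reachable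
  · exact ((adj_iff_of_compl_neighborSet_eq_singleton hx).2 ⟨hzx, hzx'⟩).reachable

end Graph

section TransportPlan

variable {V : Type*} [Fintype V]

/-- A transport plan between two mass distributions on `V`: a nonnegative matrix with prescribed
marginals. The total mass is arbitrary, so that plans can be added, and the upper bound
`π x y ≤ 1` required in `W1` is not part of the notion. -/
structure IsTransportPlan (μ₁ μ₂ : V → ℝ) (π : V → V → ℝ) : Prop where
  nonneg : 0 ≤ π
  sum_left : ∀ x, ∑ y, π x y = μ₁ x
  sum_right : ∀ y, ∑ x, π x y = μ₂ y

/-- The total cost of a transport plan with respect to the graph distance, the quantity minimised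
in `W1`. -/
def transportCost (G : SimpleGraph V) (π : V → V → ℝ) : ℝ :=
  ∑ x, ∑ y, (G.dist x y : ℝ) * π x y

variable {G : SimpleGraph V} {μ₁ μ₂ ν₁ ν₂ ρ f : V → ℝ} {π σ : V → V → ℝ} {x y u v : V} {α β : ℝ}

namespace IsTransportPlan

theorem le_one (hπ : IsTransportPlan μ₁ μ₂ π) (hμ : μ₁ ≤ 1) (x y : V) : π x y ≤ 1 :=
  calc
    π x y ≤ ∑ w, π x w := single_le_sum (fun w _ => hπ.nonneg x w) (mem_univ y)
    _ = μ₁ x := hπ.sum_left x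
    _ ≤ 1 := hμ x

theorem add (hπ : IsTransportPlan μ₁ μ₂ π) (hσ : IsTransportPlan ν₁ ν₂ σ) :
    IsTransportPlan (μ₁ + ν₁) (μ₂ + ν₂) (π + σ) where
  nonneg := add_nonneg hπ.nonneg hσ.nonneg
  sum_left x := by simp [sum_add_distrib, hπ.sum_left, hσ.sum_left]
  sum_right y := by simp [sum_add_distrib, hπ.sum_right, hσ.sum_right]

theorem diagonal (hρ : 0 ≤ ρ) : IsTransportPlan ρ ρ fun z => Pi.single z (ρ z) where
  nonneg z := show (0 : V → ℝ) ≤ Pi.single z (ρ z) from Pi.single_nonneg.2 (hρ z)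
  sum_left z := by simp
  sum_right w := by simp [Pi.single_apply]

theorem single (x y : V) (hα : 0 ≤ α) :
    IsTransportPlan (Pi.single x α) (Pi.single y α) (Pi.single x (Pi.single y α)) where
  nonneg := Pi.single_nonneg.2 (Pi.single_nonneg.2 hα)
  sum_left z := by by_cases hz : z = x <;> simp [Pi.single_apply, hz]
  sum_right w := by simp [Pi.single_apply, ite_apply]

theorem sum_mul_sub_le_transportCost (hπ : IsTransportPlan μ₁ μ₂ π)
    (hf : ∀ z w, f z - f w ≤ G.dist z w) :
    ∑ z, f z * (μ₁ z - μ₂ z) ≤ transportCost G π :=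
  calc
    ∑ z, f z * (μ₁ z - μ₂ z) = ∑ z, f z * μ₁ z - ∑ w, f w * μ₂ w := by
      simp only [mul_sub, sum_sub_distrib]
    _ = ∑ z, ∑ w, f z * π z w - ∑ z, ∑ w, f w * π z w := by
      rw [sum_comm (f := fun z w => f w * π z w)]
      simp only [← mul_sum, hπ.sum_left, hπ.sum_right]
    _ = ∑ z, ∑ w, (f z - f w) * π z w := by simp only [sub_mul, sum_sub_distrib]
    _ ≤ transportCost G π := sum_le_sum fun z _ => sum_le_sum fun w _ =>
      mul_le_mul_of_nonneg_right (hf z w) (hπ.nonneg z w)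

theorem W1_eq_transportCost (hπ : IsTransportPlan μ₁ μ₂ π) (hμ : μ₁ ≤ 1)
    (hf : ∀ z w, f z - f w ≤ G.dist z w)
    (hle : transportCost G π ≤ ∑ z, f z * (μ₁ z - μ₂ z)) :
    W1 G μ₁ μ₂ = transportCost G π := by
  refine IsLeast.csInf_eq ⟨⟨π, fun z w => ⟨hπ.nonneg z w, hπ.le_one hμ z w⟩,
    hπ.sum_left, hπ.sum_right, rfl⟩, ?_⟩
  rintro _ ⟨σ, hσ, hσ₁, hσ₂, rfl⟩
  have hplan : IsTransportPlan μ₁ μ₂ σ := ⟨fun z w => (hσ z w).1, hσ₁, hσ₂⟩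
  exact hle.trans (hplan.sum_mul_sub_le_transportCost hf)

end IsTransportPlan

theorem transportCost_add : transportCost G (π + σ) = transportCost G π + transportCost G σ := by
  simp [transportCost, mul_add, sum_add_distrib]

theorem transportCost_diagonal : transportCost G (fun z => Pi.single z (ρ z)) = 0 := by
  simp [transportCost, Pi.single_apply]

theorem transportCost_single :
    transportCost G (Pi.single x (Pi.single y α)) = G.dist x y * α := by
  simp [transportCost, Pi.single_apply, ite_apply]

theorem W1_add_single_add_single (hG : G.Connected) (hxy : G.Adj x y) (huv : G.Adj u v)
    (hxv : x ≠ v) (huy : u ≠ y) (hρ : 0 ≤ ρ) (hα : 0 ≤ α) (hβ : 0 ≤ β)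
    (hle : ρ + Pi.single x α + Pi.single u β ≤ 1) :
    W1 G (ρ + Pi.single x α + Pi.single u β) (ρ + Pi.single y α + Pi.single v β) = α + β := by
  have hplan := ((IsTransportPlan.diagonal hρ).add (.single x y hα)).add (.single u v hβ)
  have hcost : transportCost G ((fun z => Pi.single z (ρ z)) + Pi.single x (Pi.single y α) +
      Pi.single u (Pi.single v β)) = α + β := by
    simp [transportCost_add, transportCost_diagonal, transportCost_single,
      SimpleGraph.dist_eq_one_iff_adj.2 hxy, SimpleGraph.dist_eq_one_iff_adj.2 huv]
  have hgain : ∑ z, ({x, u} : Set V).indicator (1 : V → ℝ) z *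
      ((ρ + Pi.single x α + Pi.single u β : V → ℝ) z -
        (ρ + Pi.single y α + Pi.single v β : V → ℝ) z) = α + β := by
    simp [add_assoc, mul_add, mul_sub, sum_add_distrib, sum_sub_distrib, Pi.single_apply,
      Set.indicator_apply, hxy.ne', huv.ne', hxv.symm, huy.symm]
  rw [hplan.W1_eq_transportCost hle (indicator_sub_indicator_le_dist hG {x, u})
    (hcost.trans hgain.symm).le, hcost]

end TransportPlan

section Curvature

variable {V : Type*} [Fintype V] {G : SimpleGraph V} {x y x' y' : V} {p : ℝ}

theorem kappaLLY_eq_of_eventually_kappa_eq {c : ℝ}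
    (h : ∀ᶠ p in nhdsWithin 1 (Set.Iio 1), kappa G p x y = c * (1 - p)) :
    kappaLLY G x y = c := by
  refine (tendsto_const_nhds.congr' ?_).limUnder_eq
  filter_upwards [h, self_mem_nhdsWithin] with p hp hp1
  rw [hp, mul_div_cancel_right₀ c (sub_ne_zero.2 (ne_of_gt hp1))]

theorem deg_add_two_of_compl_neighborSet_eq_singleton (hx : Gᶜ.neighborSet x = {x'}) :
    deg G x + 2 = Fintype.card V := by
  have hxx' := ne_of_compl_neighborSet_eq_singleton hx
  have hnbr : univ.filter (G.Adj x) = {x, x'}ᶜ := by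
    ext z
    simp [adj_iff_of_compl_neighborSet_eq_singleton hx]
  rw [deg, hnbr, ← card_pair hxx', card_compl_add_card]

theorem mu_eq_of_compl_neighborSet_eq_singleton (hx : Gᶜ.neighborSet x = {x'}) :
    mu G p x = Function.const V ((1 - p) / deg G x) + Pi.single x (p - (1 - p) / deg G x) -
      Pi.single x' ((1 - p) / deg G x) := by
  have hxx' := ne_of_compl_neighborSet_eq_singleton hx
  ext z
  rcases eq_or_ne z x with rfl | hzx
  · simp [mu, hxx']
  · by_cases hzx' : z = x' <;>
      simp [mu, adj_iff_of_compl_neighborSet_eq_singleton hx, hzx, hzx', hxx'.symm]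

theorem mu_le_one (hp₀ : 0 ≤ p) (hp₁ : p ≤ 1) : mu G p x ≤ 1 := by
  intro z
  have hq : (1 - p) / deg G x ≤ 1 := by
    rcases (deg G x).eq_zero_or_pos with hdeg | hdeg
    · simp [hdeg]
    · have hdeg' : (1 : ℝ) ≤ deg G x := mod_cast hdeg
      exact (div_le_self (sub_nonneg.2 hp₁) hdeg').trans (sub_le_self 1 hp₀)
  unfold mu
  split_ifs
  exacts [hp₁, hq, zero_le_one]

theorem kappa_eq_one_sub_of_compl_neighborSet_eq_singleton (hxy : G.Adj x y)
    (hx : Gᶜ.neighborSet x = {x'}) (hy : Gᶜ.neighborSet y = {y'}) (hxy' : G.Adj x' y')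
    (hp : (1 - p) / deg G x ≤ p) (hp₁ : p ≤ 1) : kappa G p x y = 1 - p := by
  have hdeg : deg G y = deg G x := by
    have := deg_add_two_of_compl_neighborSet_eq_singleton hx
    have := deg_add_two_of_compl_neighborSet_eq_singleton hy
    omega
  have hG := connected_of_compl_neighborSet_eq_singleton hxy hx hy hxy'.ne
  have hq : 0 ≤ (1 - p) / deg G x := div_nonneg (sub_nonneg.2 hp₁) (Nat.cast_nonneg _)
  have hle : mu G p x ≤ 1 := mu_le_one (hq.trans hp) hp₁
  have hμx := mu_eq_of_compl_neighborSet_eq_singleton (p := p) hx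
  have hμy := mu_eq_of_compl_neighborSet_eq_singleton (p := p) hy
  rw [hdeg] at hμy
  set q := (1 - p) / deg G x
  have hρ : 0 ≤ Function.const V q - Pi.single x' q - Pi.single y' q := by
    intro z
    by_cases hz : z = x' <;> by_cases hz' : z = y' <;> simp_all
  have hsplit_x : mu G p x =
      (Function.const V q - Pi.single x' q - Pi.single y' q) + Pi.single x (p - q) +
        Pi.single y' q := by rw [hμx]; abel
  have hsplit_y : mu G p y =
      (Function.const V q - Pi.single x' q - Pi.single y' q) + Pi.single y (p - q) +
        Pi.single x' q := by rw [hμy]; abel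
  have hxx' := ne_of_compl_neighborSet_eq_singleton hx
  have hyy' := ne_of_compl_neighborSet_eq_singleton hy
  rw [kappa, hsplit_x, hsplit_y, W1_add_single_add_single hG hxy hxy'.symm hxx' hyy'.symm hρ
    (sub_nonneg.2 hp) hq (hsplit_x ▸ hle), sub_add_cancel]

theorem kappaLLY_eq_one_of_compl_neighborSet_eq_singleton (hxy : G.Adj x y)
    (hx : Gᶜ.neighborSet x = {x'}) (hy : Gᶜ.neighborSet y = {y'}) (hxy' : G.Adj x' y') :
    kappaLLY G x y = 1 := by
  have hdeg : (1 : ℝ) ≤ deg G x :=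
    mod_cast card_pos.2 ⟨y, mem_filter.2 ⟨mem_univ y, hxy⟩⟩
  refine kappaLLY_eq_of_eventually_kappa_eq ?_
  filter_upwards [Ico_mem_nhdsLT (show (1 / 2 : ℝ) < 1 by norm_num)] with p ⟨hp, hp₁⟩
  have hq : (1 - p) / deg G x ≤ 1 - p := div_le_self (sub_nonneg.2 hp₁.le) hdeg
  rw [one_mul, kappa_eq_one_sub_of_compl_neighborSet_eq_singleton hxy hx hy hxy'
    (by linarith) hp₁.le]

end Curvature

namespace IsMatchingDeletionOfComplete

variable {V : Type*} {G : SimpleGraph V} {x y z x' y' : V}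

theorem eq_of_compl_adj (hG : IsMatchingDeletionOfComplete G) (hy : Gᶜ.Adj x y)
    (hz : Gᶜ.Adj x z) : y = z := by
  obtain ⟨M, -, -, hM, hadj⟩ := hG
  simp only [SimpleGraph.compl_adj, hadj] at hy hz
  exact hM x y z (by tauto) (by tauto)

theorem compl_neighborSet_eq_singleton (hG : IsMatchingDeletionOfComplete G)
    (hx : Gᶜ.Adj x x') : Gᶜ.neighborSet x = {x'} :=
  Set.eq_singleton_iff_unique_mem.2 ⟨hx, fun _ hz => hG.eq_of_compl_adj hz hx⟩

theorem adj_of_compl_adj (hG : IsMatchingDeletionOfComplete G) (hxy : G.Adj x y)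
    (hx : Gᶜ.Adj x x') (hy : Gᶜ.Adj y y') : G.Adj x' y' := by
  have hne : x' ≠ y' := by
    rintro rfl
    exact hxy.ne (hG.eq_of_compl_adj hx.symm hy.symm)
  by_contra hnot
  have hx'y' : Gᶜ.Adj x' y' := (G.compl_adj x' y').2 ⟨hne, hnot⟩
  obtain rfl : x = y' := hG.eq_of_compl_adj hx.symm hx'y'
  exact hy.2 hxy.symm

end IsMatchingDeletionOfComplete

theorem stmt1_general {V : Type*} [Fintype V] {G : SimpleGraph V}
    (hG : IsMatchingDeletionOfComplete G) {x y : V} (hxy : G.Adj x y)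
    (hx : x ∈ Gᶜ.support) (hy : y ∈ Gᶜ.support) : kappaLLY G x y = 1 := by
  obtain ⟨x', hx'⟩ := hx
  obtain ⟨y', hy'⟩ := hy
  exact kappaLLY_eq_one_of_compl_neighborSet_eq_singleton hxy
    (hG.compl_neighborSet_eq_singleton hx') (hG.compl_neighborSet_eq_singleton hy')
    (hG.adj_of_compl_adj hxy hx' hy')

theorem compl_Gab_adj {a b : ℕ} {x y : Fin (2 * a + b)} :
    (Gab a b)ᶜ.Adj x y ↔
      x ≠ y ∧ (x : ℕ) < 2 * a ∧ (y : ℕ) < 2 * a ∧ (x : ℕ) / 2 = (y : ℕ) / 2 := by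
  simp only [SimpleGraph.compl_adj, Gab]
  tauto

theorem isMatchingDeletionOfComplete_Gab (a b : ℕ) : IsMatchingDeletionOfComplete (Gab a b) := by
  refine ⟨(Gab a b)ᶜ.Adj, fun _ _ => SimpleGraph.Adj.symm, fun x => (Gab a b)ᶜ.irrefl,
    fun x y z hy hz => ?_, fun x y => ?_⟩
  · simp only [compl_Gab_adj, ne_eq, Fin.ext_iff] at hy hz ⊢
    omega
  · rw [← SimpleGraph.compl_adj, compl_compl]

theorem mem_support_compl_Gab {a b : ℕ} {x : Fin (2 * a + b)} (hx : (x : ℕ) < 2 * a) :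
    x ∈ (Gab a b)ᶜ.support := by
  -- The partner of `2k` is `2k + 1` and conversely, the two indices adding up to `4k + 1`.
  refine ⟨⟨4 * (x / 2) + 1 - x, by omega⟩, compl_Gab_adj.2 ?_⟩
  simp only [ne_eq, Fin.ext_iff]
  omega

/-- In `G(a,b)` with `a ≥ 2`, `b ≥ 1`, every edge `u_i ∼ u_j` has `κ_LLY = 1`. -/
theorem stmt1 (a b : ℕ) (ha : 2 ≤ a) (hb : 1 ≤ b) (i j : ℕ)
    (hi : 1 ≤ i) (hij : i < j) (hj : j ≤ 2*a)
    (hadj : (Gab a b).Adj ⟨i-1, by omega⟩ ⟨j-1, by omega⟩) :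
    kappaLLY (Gab a b) ⟨i-1, by omega⟩ ⟨j-1, by omega⟩ = 1 := by
  exact stmt1_general (isMatchingDeletionOfComplete_Gab a b) hadj
    (mem_support_compl_Gab (by dsimp only; omega)) (mem_support_compl_Gab (by dsimp only; omega))
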